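/- There exist constants c > 0 and C ≥ 1 such that for every integer n ≥ 2 there is an instance (J,M) of P||C_max with at most C·n jobs, at most C·n machines, processing times p_j ∈ {1,2}, and opt(J,M) = 2, with the following property: every polytope P̄ ⊆ P(J,M) such that (i) P̄ contains the point (x^σ, 2) for every optimal schedule σ (i.e., every schedule of makespan 2), and (ii) every extreme point of P̄ is of the form (x^σ, T) for some schedule σ and some integer T with T ≥ makespan(σ), satisfies xc(P̄) ≥ 2^{c·n/log n}. -/

import Mathlib

open Finset

noncomputable section

/-- An extended formulation of size `k` (number of inequalities) for `P ⊆ ℝ^ι`. -/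
def IsEF {ι : Type} [Fintype ι] (P : Set (ι → ℝ)) (k : ℕ) : Prop :=
  ∃ (e l : ℕ) (A : Matrix (Fin k) (Fin e) ℝ) (b : Fin k → ℝ)
    (C : Matrix (Fin l) (Fin e) ℝ) (d : Fin l → ℝ)
    (π : (Fin e → ℝ) →ᵃ[ℝ] (ι → ℝ)),
    π '' {y | (∀ r, A.mulVec y r ≤ b r) ∧ (∀ r, C.mulVec y r = d r)} = P

/-- The extension complexity of `P`. -/
noncomputable def xc {ι : Type} [Fintype ι] (P : Set (ι → ℝ)) : ℕ :=
  sInf {k | IsEF P k}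

/-- The load of machine `i` under schedule `σ`. -/
def load {n m : ℕ} (p : Fin n → ℕ) (σ : Fin n → Fin m) (i : Fin m) : ℕ :=
  ∑ j, if σ j = i then p j else 0

/-- The makespan of a schedule: the maximum machine load. -/
def makespan {n m : ℕ} (p : Fin n → ℕ) (σ : Fin n → Fin m) : ℕ :=
  Finset.univ.sup (load p σ)

/-- The optimal makespan of the instance. -/
noncomputable def optMakespan (n m : ℕ) (p : Fin n → ℕ) : ℕ :=
  sInf {t | ∃ σ : Fin n → Fin m, makespan p σ = t}

/-- The 0/1 assignment vector of a schedule, indexed by machine-job pairs. -/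
def assignVec {n m : ℕ} (σ : Fin n → Fin m) : Fin m × Fin n → ℝ :=
  fun q => if σ q.2 = q.1 then 1 else 0

/-- `Q(J,M)`: the convex hull of the assignment vectors of all schedules. -/
def Qpoly (n m : ℕ) : Set (Fin m × Fin n → ℝ) :=
  convexHull ℝ {x | ∃ σ : Fin n → Fin m, x = assignVec σ}

/-- `P(J,M)`: the convex hull of all points `(x^σ, T)` where `σ` is a schedule and the
natural number `T` upper-bounds every machine load; the `T`-coordinate is the `none`
coordinate of the ambient space `ℝ^(Option (M × J))`. -/
def Ppoly (n m : ℕ) (p : Fin n → ℕ) : Set (Option (Fin m × Fin n) → ℝ) :=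
  convexHull ℝ {z | ∃ (σ : Fin n → Fin m) (t : ℕ), (∀ i, load p σ i ≤ t) ∧
    z = fun q => Option.elim q (t : ℝ) (fun ij => assignVec σ ij)}

/-!
Every vertex of a complete graph contributes a unit job, a long job and two machines, one of which
is its home machine. Every matching `π` of the graph gives an optimal schedule, in which the unit
jobs of matched vertices share a home machine, and for every vertex set `X` of odd size some affine
functional is nonnegative on `P(J,M)` and takes the value `#defects - 1` on that schedule, where the
defects are the vertices of `X` that `π` does not match within `X`. By Yannakakis' argument, an
extended formulation of a subpolytope containing the optimal schedules writes this matrix, the slack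
matrix of the odd-set inequalities, as a sum of few nonnegative matrices of rank one.

Inside it lie two families of rows and columns indexed by a cube, with a distinguished bit. On pairs
with bit `0` the entry is `2`, on pairs with bit `1` it is `4`, and when a pair with bit `0` is
rotated along a pentagon, the entries between consecutive rotations vanish. Let a nonnegative matrix
of rank one be dominated by the slack matrix. Averaged over all relabellings of the vertices, its
row and column weights hardly depend on the distinguished bit, up to an exponentially small error,
because that bit is exchangeable with all the others. Since at most two of the five rotations of a
pair carry weight, the total weight on the pairs with bit `0` is about `2/5` of that on the pairs
with bit `1`, or less. The ratio of the true entries is `1/2`, so exponentially many matrices of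
rank one are needed.
-/

section Farkas

variable {𝕜 E ι : Type*} [Field 𝕜] [LinearOrder 𝕜] [IsStrictOrderedRing 𝕜]
  [AddCommGroup E] [Module 𝕜 E]

theorem exists_nonneg_sum_smul_eq_of_forall_nonneg (s : Finset ι) (a : ι → E →ₗ[𝕜] 𝕜)
    (b : E →ₗ[𝕜] 𝕜) (h : ∀ x, (∀ i ∈ s, 0 ≤ a i x) → 0 ≤ b x) :
    ∃ c : ι → 𝕜, (∀ i ∈ s, 0 ≤ c i) ∧ b = ∑ i ∈ s, c i • a i := by
  classical
  induction s using Finset.induction_on generalizing a b with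
  | empty =>
    refine ⟨0, by simp, LinearMap.ext fun x => le_antisymm ?_ ?_⟩
    · simpa using h (-x) (by simp)
    · simpa using h x (by simp)
  | insert j s hj ih =>
    suffices ∃ (t : 𝕜) (c : ι → 𝕜), 0 ≤ t ∧ (∀ i ∈ s, 0 ≤ c i) ∧
        b = t • a j + ∑ i ∈ s, c i • a i by
      obtain ⟨t, c, ht, hc, rfl⟩ := this
      have hne : ∀ i ∈ s, i ≠ j := fun i hi => ne_of_mem_of_not_mem hi hj
      refine ⟨Function.update c j t, ?_, ?_⟩
      · simpa [ht] using fun i hi => by simpa [hne i hi] using hc i hi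
      · rw [sum_insert hj, Function.update_self]
        exact congrArg _ (sum_congr rfl fun i hi => by rw [Function.update_of_ne (hne i hi)])
    by_cases hb : ∀ x, (∀ i ∈ s, 0 ≤ a i x) → 0 ≤ b x
    · obtain ⟨c, hc, rfl⟩ := ih a b hb
      exact ⟨0, c, le_rfl, hc, by simp⟩
    push Not at hb
    obtain ⟨z, hz, hbz⟩ := hb
    have hjz : a j z < 0 := by
      by_contra! hjz
      exact hbz.not_ge (h z (by simpa [hjz] using hz))
    -- The projection along `z` onto the kernel of `a j` makes the constraint `a j` vacuous.
    let T : E →ₗ[𝕜] E := LinearMap.id - ((a j z)⁻¹ • a j).smulRight z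
    have hT (f : E →ₗ[𝕜] 𝕜) (x : E) : f (T x) = f x - a j x / a j z * f z := by
      simp [T, div_eq_inv_mul]
    obtain ⟨c, hc, hbc⟩ := ih (fun i => a i ∘ₗ T) (b ∘ₗ T) fun x hx => h (T x) fun i hi => by
      rcases mem_insert.mp hi with rfl | hi
      · simp [hT, hjz.ne]
      · exact hx i hi
    set f := ∑ i ∈ s, c i • a i with hf
    have hfz : 0 ≤ f z := by
      simpa [hf] using sum_nonneg fun i hi => mul_nonneg (hc i hi) (hz i hi)
    refine ⟨(b z - f z) / a j z, c, div_nonneg_of_nonpos (by linarith) hjz.le, hc, ?_⟩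
    ext x
    have hbf : b (T x) = f (T x) := by simpa [hf] using LinearMap.congr_fun hbc x
    rw [hT, hT] at hbf
    simp only [LinearMap.add_apply, LinearMap.smul_apply, smul_eq_mul]
    linear_combination hbf

theorem linear_nonneg_of_forall_nonneg {g : E →ᵃ[𝕜] 𝕜} {y₀ y : E}
    (h : ∀ t : 𝕜, 0 ≤ t → 0 ≤ g (y₀ + t • y)) : 0 ≤ g.linear y := by
  by_contra! hy
  have hg (t : 𝕜) : g (y₀ + t • y) = g y₀ + t * g.linear y := by
    rw [add_comm, ← vadd_eq_add, g.map_vadd, map_smul, smul_eq_mul, vadd_eq_add, add_comm]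
  have hy₀ : 0 ≤ g y₀ := by simpa using h 0 le_rfl
  have := h ((g y₀ + 1) / -g.linear y) (div_nonneg (by linarith) (by linarith))
  rw [hg, div_neg, neg_mul, div_mul_cancel₀ _ hy.ne] at this
  linarith

theorem exists_nonneg_eq_add_sum_mul_of_forall_nonneg [Fintype ι] (a : ι → E →ᵃ[𝕜] 𝕜)
    (g : E →ᵃ[𝕜] 𝕜) (hne : ∃ y, ∀ i, 0 ≤ a i y) (h : ∀ y, (∀ i, 0 ≤ a i y) → 0 ≤ g y) :
    ∃ (c₀ : 𝕜) (c : ι → 𝕜), 0 ≤ c₀ ∧ (∀ i, 0 ≤ c i) ∧ ∀ y, g y = c₀ + ∑ i, c i * a i y := by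
  obtain ⟨y₀, hy₀⟩ := hne
  let homog (f : E →ᵃ[𝕜] 𝕜) : E × 𝕜 →ₗ[𝕜] 𝕜 :=
    f.linear.coprod (LinearMap.toSpanSingleton 𝕜 𝕜 (f 0))
  have homog_zero (f : E →ᵃ[𝕜] 𝕜) (y : E) : homog f (y, 0) = f.linear y := by simp [homog]
  have homog_one (f : E →ᵃ[𝕜] 𝕜) (y : E) : homog f (y, 1) = f y := by
    simpa [homog] using (congrFun f.decomp y).symm
  have homog_pos (f : E →ᵃ[𝕜] 𝕜) (y : E) {t : 𝕜} (ht : 0 < t) :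
      homog f (y, t) = t * f (t⁻¹ • y) := by
    rw [← homog_one, ← smul_eq_mul, ← map_smul]
    simp [ht.ne']
  obtain ⟨c, hc, hgc⟩ := exists_nonneg_sum_smul_eq_of_forall_nonneg univ
    (fun i : Option ι => i.elim (LinearMap.snd 𝕜 E 𝕜) fun i => homog (a i)) (homog g) (by
      rintro ⟨y, t⟩ hy
      have ht : 0 ≤ t := hy none (mem_univ _)
      replace hy (i : ι) : 0 ≤ homog (a i) (y, t) := hy (some i) (mem_univ _)
      rcases ht.eq_or_lt with rfl | ht
      · rw [homog_zero]
        refine linear_nonneg_of_forall_nonneg (y₀ := y₀) fun t ht => h _ fun i => ?_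
        rw [add_comm, ← vadd_eq_add, (a i).map_vadd, map_smul]
        exact add_nonneg (mul_nonneg ht (homog_zero (a i) y ▸ hy i)) (hy₀ i)
      · rw [homog_pos g y ht]
        refine mul_nonneg ht.le (h _ fun i => ?_)
        exact nonneg_of_mul_nonneg_right (homog_pos (a i) y ht ▸ hy i) ht)
  refine ⟨c none, fun i => c (some i), hc _ (mem_univ _), fun i => hc _ (mem_univ _), fun y => ?_⟩
  rw [← homog_one g, hgc, Fintype.sum_option]
  simp [homog_one]

end Farkas

section ExtendedFormulations

variable {ι : Type} [Fintype ι] {P S : Set (ι → ℝ)} {k : ℕ}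

theorem isEF_convexHull_range (v : Fin k → ι → ℝ) :
    IsEF (convexHull ℝ (Set.range v)) k := by
  have hv : Set.range v = Fintype.linearCombination ℝ v ''
      Set.range (fun i => (Pi.single i 1 : Fin k → ℝ)) := by
    rw [← Set.range_comp]
    congr 1
    ext i q
    simp
  refine ⟨k, 1, -1, 0, Matrix.of fun _ _ => 1, fun _ => 1,
    (Fintype.linearCombination ℝ v).toAffineMap, ?_⟩
  rw [hv, ← LinearMap.image_convexHull, convexHull_rangle_single_eq_stdSimplex]
  simp only [Matrix.neg_mulVec, Matrix.one_mulVec]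
  simp [stdSimplex, Matrix.mulVec, dotProduct]

theorem isEF_xc_convexHull (hS : S.Finite) : IsEF (convexHull ℝ S) (xc (convexHull ℝ S)) := by
  obtain ⟨k, v, -, rfl⟩ := hS.fin_param
  exact Nat.sInf_mem (s := {k | IsEF _ k}) ⟨k, isEF_convexHull_range v⟩

/-- The easy half of Yannakakis' theorem, with one extra term for the constant in the affine form
of Farkas' lemma. -/
theorem IsEF.exists_nonneg_factorization {α β : Type*} (hP : IsEF P k)
    (h : α → (ι → ℝ) →ᵃ[ℝ] ℝ) (hh : ∀ i, ∀ z ∈ P, 0 ≤ h i z) (s : β → ι → ℝ) (hs : ∀ j, s j ∈ P) :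
    ∃ (f : Option (Fin k) → α → ℝ) (g : Option (Fin k) → β → ℝ),
      (∀ r i, 0 ≤ f r i) ∧ (∀ r j, 0 ≤ g r j) ∧ ∀ i j, h i (s j) = ∑ r, f r i * g r j := by
  obtain ⟨e, l, A, b, C, d, π, rfl⟩ := hP
  choose y hy hys using hs
  rcases isEmpty_or_nonempty β with hβ | ⟨⟨j₀⟩⟩
  · exact ⟨0, 0, fun _ _ => le_rfl, fun _ _ => le_rfl, fun _ j => isEmptyElim j⟩
  let slack : Fin k → (Fin e → ℝ) →ᵃ[ℝ] ℝ := fun r =>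
    AffineMap.const ℝ _ (b r) - (LinearMap.proj r ∘ₗ A.mulVecLin).toAffineMap
  let residual : Fin l → (Fin e → ℝ) →ᵃ[ℝ] ℝ := fun r =>
    AffineMap.const ℝ _ (d r) - (LinearMap.proj r ∘ₗ C.mulVecLin).toAffineMap
  have slack_nonneg {x r} : 0 ≤ slack r x ↔ A.mulVec x r ≤ b r := by simp [slack]
  have residual_eq_zero {x r} : residual r x = 0 ↔ C.mulVec x r = d r := by
    simp [residual, sub_eq_zero, eq_comm]
  have key (i : α) := exists_nonneg_eq_add_sum_mul_of_forall_nonneg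
    (Sum.elim slack (Sum.elim residual (-residual))) ((h i).comp π)
    ⟨y j₀, by
      simpa [slack_nonneg, residual_eq_zero.mpr ((hy j₀).2 _)] using (hy j₀).1⟩
    fun x hx => hh i _ ⟨x, ⟨fun r => slack_nonneg.mp (hx (.inl r)), fun r =>
      residual_eq_zero.mp <| le_antisymm (by simpa using hx (.inr (.inr r))) (hx (.inr (.inl r)))⟩,
      rfl⟩
  choose c₀ c hc₀ hc hEq using key
  refine ⟨fun r i => r.elim (c₀ i) fun r => c i (.inl r), fun r j => r.elim 1 (slack · (y j)),
    ?_, ?_, fun i j => ?_⟩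
  · rintro (_ | r) i
    exacts [hc₀ i, hc i _]
  · rintro (_ | r) j
    exacts [zero_le_one, slack_nonneg.mpr ((hy j).1 r)]
  · rw [← hys j]
    simpa [residual_eq_zero.mpr ((hy j).2 _), Fintype.sum_option] using hEq i (y j)

end ExtendedFormulations

section BooleanCube

variable {I : Type*} [Fintype I] [DecidableEq I]

/-- The sum of a function on the cube `{0,1}^I` over the facet `x i = b`. -/
def facetSum (φ : (I → Bool) → ℝ) (i : I) (b : Bool) : ℝ := ∑ x with x i = b, φ x

/-- The character `0 ↦ 1`, `1 ↦ -1` of a bit. -/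
def boolSign (b : Bool) : ℝ := bif b then -1 else 1

theorem facetSum_false_add_true (φ : (I → Bool) → ℝ) (i : I) :
    facetSum φ i false + facetSum φ i true = ∑ x, φ x := by
  simpa [facetSum] using sum_filter_add_sum_filter_not univ (fun x : I → Bool => x i = false) φ

theorem facetSum_false_sub_true (φ : (I → Bool) → ℝ) (i : I) :
    facetSum φ i false - facetSum φ i true = ∑ x, boolSign (x i) * φ x := by
  rw [facetSum, facetSum, sum_filter, sum_filter, ← sum_sub_distrib]
  refine sum_congr rfl fun x _ => ?_
  cases x i <;> simp [boolSign]

theorem facetSum_nonneg {φ : (I → Bool) → ℝ} (h : ∀ x, 0 ≤ φ x) (i : I) (b : Bool) :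
    0 ≤ facetSum φ i b :=
  sum_nonneg fun x _ => h x

theorem facetSum_congr {φ ψ : (I → Bool) → ℝ} {i : I} {b : Bool}
    (h : ∀ x, x i = b → φ x = ψ x) : facetSum φ i b = facetSum ψ i b :=
  sum_congr rfl fun x hx => h x (mem_filter.mp hx).2

theorem facetSum_comp_swap (φ : (I → Bool) → ℝ) (i j : I) (b : Bool) :
    facetSum (fun x => φ (x ∘ Equiv.swap i j)) i b = facetSum φ j b :=
  sum_equiv (Equiv.arrowCongr (Equiv.swap i j) (Equiv.refl Bool)) (by simp) (by
    simp [Equiv.arrowCongr, Function.comp_def])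

theorem card_facet (i : I) (b : Bool) :
    (#{x : I → Bool | x i = b} : ℝ) = 2 ^ Fintype.card I / 2 := by
  have hflip : #{x : I → Bool | x i = b} = #{x : I → Bool | x i = !b} :=
    card_equiv (Equiv.arrowCongr (Equiv.refl I) Equiv.boolNot) (by simp)
  have hadd := card_filter_add_card_filter_not (s := univ) fun x : I → Bool => x i = b
  simp only [← Bool.eq_not, ← hflip, card_univ, Fintype.card_fun, Fintype.card_bool] at hadd
  rw [eq_div_iff two_ne_zero, mul_two]
  exact_mod_cast hadd

theorem sum_exp_sum_mul_boolSign_le (a : I → ℝ) :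
    ∑ x : I → Bool, Real.exp (∑ i, a i * boolSign (x i)) ≤
      2 ^ Fintype.card I * Real.exp ((∑ i, a i ^ 2) / 2) := by
  have hcosh (t : ℝ) : ∑ b : Bool, Real.exp (t * boolSign b) ≤ 2 * Real.exp (t ^ 2 / 2) := by
    have := Real.cosh_le_exp_half_sq t
    rw [Real.cosh_eq] at this
    simp [boolSign]
    linarith
  simp_rw [Real.exp_sum]
  rw [← Fintype.prod_sum fun i b => Real.exp (a i * boolSign b)]
  calc ∏ i, ∑ b, Real.exp (a i * boolSign b)
      ≤ ∏ i, 2 * Real.exp (a i ^ 2 / 2) := by gcongr; exact hcosh _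
    _ = 2 ^ Fintype.card I * Real.exp ((∑ i, a i ^ 2) / 2) := by
        rw [prod_mul_distrib, prod_const, card_univ, ← Real.exp_sum, sum_div]

theorem mul_le_add_mul_exp {u t α η n : ℝ} (hη : 0 ≤ η) (hn : 0 ≤ n) (hu : 0 ≤ u) (huα : u ≤ α)
    (ht : t ≤ n) : u * t ≤ η * n * u + α * n * (Real.exp (-(η ^ 2 * n)) * Real.exp (η * t)) := by
  have hα : 0 ≤ α := hu.trans huα
  rw [← Real.exp_add]
  rcases le_total t (η * n) with h | h
  · have hut := mul_le_mul_of_nonneg_left h hu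
    have : 0 ≤ α * n * Real.exp (-(η ^ 2 * n) + η * t) := by positivity
    linarith
  · have hexp : 1 ≤ Real.exp (-(η ^ 2 * n) + η * t) := by
      rw [Real.one_le_exp_iff]
      linarith [mul_le_mul_of_nonneg_left h hη]
    calc u * t ≤ u * n := mul_le_mul_of_nonneg_left ht hu
      _ ≤ α * n := mul_le_mul_of_nonneg_right huα hn
      _ ≤ α * n * Real.exp (-(η ^ 2 * n) + η * t) := le_mul_of_one_le_right (by positivity) hexp
      _ ≤ _ := le_add_of_nonneg_left (by positivity)

theorem sum_mul_sum_mul_boolSign_le {φ : (I → Bool) → ℝ} {α η : ℝ} (hη : 0 ≤ η)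
    (hφ : ∀ x, 0 ≤ φ x) (hφα : ∀ x, φ x ≤ α) {a : I → ℝ} (ha : ∀ i, |a i| ≤ 1) :
    ∑ x, φ x * ∑ i, a i * boolSign (x i) ≤ η * Fintype.card I * ∑ x, φ x +
      α * Fintype.card I * 2 ^ Fintype.card I * Real.exp (-(η ^ 2 * Fintype.card I / 2)) := by
  have hα : 0 ≤ α := (hφ fun _ => true).trans (hφα _)
  have hsign (x : I → Bool) : ∑ i, a i * boolSign (x i) ≤ Fintype.card I := by
    have (i : I) : a i * boolSign (x i) ≤ 1 := by
      have := abs_le.mp (ha i)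
      cases x i <;> simp [boolSign] <;> linarith
    simpa using sum_le_sum fun i (_ : i ∈ univ) => this i
  have hsq : ∑ i, (η * a i) ^ 2 ≤ η ^ 2 * Fintype.card I := by
    have (i : I) : (η * a i) ^ 2 ≤ η ^ 2 := by
      rw [mul_pow]
      exact mul_le_of_le_one_right (sq_nonneg η) ((sq_le_one_iff_abs_le_one _).mpr (ha i))
    simpa [mul_comm] using sum_le_sum fun i (_ : i ∈ univ) => this i
  have hmgf : ∑ x : I → Bool, Real.exp (η * ∑ i, a i * boolSign (x i)) ≤
      2 ^ Fintype.card I * Real.exp (η ^ 2 * Fintype.card I / 2) := by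
    simp only [mul_sum, ← mul_assoc]
    exact (sum_exp_sum_mul_boolSign_le _).trans (by gcongr)
  have hexp (n : ℝ) : Real.exp (-(η ^ 2 * n)) * Real.exp (η ^ 2 * n / 2) =
      Real.exp (-(η ^ 2 * n / 2)) := by
    rw [← Real.exp_add]
    ring_nf
  refine (sum_le_sum fun x _ => mul_le_add_mul_exp hη (Nat.cast_nonneg (Fintype.card I)) (hφ x)
    (hφα x) (hsign x)).trans ?_
  rw [sum_add_distrib, ← mul_sum, ← mul_sum, ← mul_sum, ← hexp, mul_assoc (α * _),
    mul_left_comm (2 ^ _)]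
  gcongr

/-- A level-one inequality: unless its mean is exponentially small, a bounded function on the cube
has small bias in an average coordinate. -/
theorem sum_abs_facetSum_sub_le {φ : (I → Bool) → ℝ} {α η : ℝ} (hη : 0 ≤ η)
    (hφ : ∀ x, 0 ≤ φ x) (hφα : ∀ x, φ x ≤ α) :
    ∑ i, |facetSum φ i false - facetSum φ i true| ≤ η * Fintype.card I * ∑ x, φ x +
      α * Fintype.card I * 2 ^ Fintype.card I * Real.exp (-(η ^ 2 * Fintype.card I / 2)) := by
  let a : I → ℝ := fun i => SignType.sign (facetSum φ i false - facetSum φ i true)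
  have ha (i : I) : |a i| ≤ 1 := by
    rcases h : SignType.sign (facetSum φ i false - facetSum φ i true) <;> simp [a, h]
  refine le_of_eq_of_le ?_ (sum_mul_sum_mul_boolSign_le hη hφ hφα ha)
  simp_rw [mul_sum]
  rw [sum_comm]
  refine sum_congr rfl fun i _ => ?_
  rw [← sign_mul_self, facetSum_false_sub_true, mul_sum]
  exact sum_congr rfl fun x _ => by rw [← facetSum_false_sub_true]; ring

section Exchangeable

variable {G : Type*} [Fintype G] (o : I) {Φ : G → (I → Bool) → ℝ} {H : G → ℝ}
  {σ : I → Equiv.Perm G}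

theorem card_mul_sum_abs_facetSum_sub_mul
    (hΦσ : ∀ i τ x, Φ (σ i τ) x = Φ τ (x ∘ Equiv.swap o i)) (hHσ : ∀ i τ, H (σ i τ) = H τ) :
    Fintype.card I * ∑ τ, |facetSum (Φ τ) o false - facetSum (Φ τ) o true| * H τ =
      ∑ τ, (∑ i, |facetSum (Φ τ) i false - facetSum (Φ τ) i true|) * H τ := by
  have hi (i : I) : ∑ τ, |facetSum (Φ τ) o false - facetSum (Φ τ) o true| * H τ =
      ∑ τ, |facetSum (Φ τ) i false - facetSum (Φ τ) i true| * H τ := by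
    rw [← Equiv.sum_comp (σ i)]
    refine sum_congr rfl fun τ _ => ?_
    rw [hHσ, funext (hΦσ i τ), facetSum_comp_swap, facetSum_comp_swap]
  simp_rw [sum_mul]
  rw [sum_comm, ← sum_congr rfl fun i _ => hi i, sum_const, nsmul_eq_mul, card_univ]

/-- If the coordinate `o` is exchangeable with every other one under symmetries that preserve the
weight `H`, then the level-one inequality bounds its own bias. -/
theorem sum_abs_facetSum_sub_mul_le {α γ η : ℝ} (hη : 0 ≤ η) (hΦ : ∀ τ x, 0 ≤ Φ τ x)
    (hΦα : ∀ τ x, Φ τ x ≤ α) (hH : ∀ τ, 0 ≤ H τ) (hHγ : ∀ τ, H τ ≤ γ)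
    (hΦσ : ∀ i τ x, Φ (σ i τ) x = Φ τ (x ∘ Equiv.swap o i)) (hHσ : ∀ i τ, H (σ i τ) = H τ) :
    (1 - η) * ∑ τ, |facetSum (Φ τ) o false - facetSum (Φ τ) o true| * H τ ≤
      2 * η * ∑ τ, facetSum (Φ τ) o false * H τ + Fintype.card G *
        (α * γ * 2 ^ Fintype.card I * Real.exp (-(η ^ 2 * Fintype.card I / 2))) := by
  rcases isEmpty_or_nonempty G with hG | ⟨⟨τ₀⟩⟩
  · simp
  have hα : 0 ≤ α := (hΦ τ₀ fun _ => true).trans (hΦα _ _)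
  set n : ℝ := (Fintype.card I : ℝ)
  have hn : 0 < n := Nat.cast_pos.mpr (Fintype.card_pos_iff.mpr ⟨o⟩)
  set Δ : G → ℝ := fun τ => |facetSum (Φ τ) o false - facetSum (Φ τ) o true|
  set err := α * 2 ^ Fintype.card I * Real.exp (-(η ^ 2 * n / 2)) with herr
  have : 0 ≤ err := by positivity
  have hbias (τ : G) : ∑ i, |facetSum (Φ τ) i false - facetSum (Φ τ) i true| ≤
      n * (2 * η * facetSum (Φ τ) o false + η * Δ τ + err) := by
    have htrue : facetSum (Φ τ) o true ≤ facetSum (Φ τ) o false + Δ τ := by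
      linarith [neg_abs_le (facetSum (Φ τ) o false - facetSum (Φ τ) o true)]
    calc _ ≤ η * n * (facetSum (Φ τ) o false + facetSum (Φ τ) o true) + n * err := by
          rw [facetSum_false_add_true]
          exact (sum_abs_facetSum_sub_le hη (hΦ τ) (hΦα τ)).trans_eq (by ring)
      _ ≤ η * n * (facetSum (Φ τ) o false + (facetSum (Φ τ) o false + Δ τ)) + n * err := by gcongr
      _ = _ := by ring
  have hsum : ∑ τ, Δ τ * H τ ≤
      ∑ τ, (2 * η * (facetSum (Φ τ) o false * H τ) + η * (Δ τ * H τ) + err * γ) := by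
    refine le_of_mul_le_mul_left ?_ hn
    rw [card_mul_sum_abs_facetSum_sub_mul o hΦσ hHσ, mul_sum]
    refine sum_le_sum fun τ _ => ?_
    calc _ ≤ n * (2 * η * facetSum (Φ τ) o false + η * Δ τ + err) * H τ :=
          mul_le_mul_of_nonneg_right (hbias τ) (hH τ)
      _ = n * (2 * η * (facetSum (Φ τ) o false * H τ) + η * (Δ τ * H τ) + err * H τ) := by ring
      _ ≤ _ := by gcongr; exact hHγ τ
  simp only [sum_add_distrib, ← mul_sum, sum_const, card_univ, nsmul_eq_mul] at hsum
  rw [herr] at hsum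
  linarith

end Exchangeable

end BooleanCube

section Pentagon

theorem mul_le_mul_add_abs_sub_mul {a b c d : ℝ} (ha : 0 ≤ a) (hb : 0 ≤ b) (hc : 0 ≤ c)
    (hd : 0 ≤ d) : a * b ≤ c * d + |a - c| * b + |b - d| * a := by
  have hbd := le_abs_self (b - d)
  rcases le_total a c with hac | hca
  · linarith [mul_nonneg (abs_nonneg (a - c)) hb, mul_le_mul_of_nonneg_left hbd ha,
      mul_le_mul_of_nonneg_right hac hd]
  · linarith [mul_le_mul_of_nonneg_right (le_abs_self (a - c)) hb,
      mul_le_mul_of_nonneg_left hbd hc, mul_le_mul_of_nonneg_right hca (abs_nonneg (b - d))]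

/-- Around a pentagon, at most two of five numbers with vanishing cyclically consecutive products
are nonzero. -/
theorem sum_range_five_le {u e : ℕ → ℝ} {K : ℝ} (hK : 0 ≤ K) (he : ∀ j, 0 ≤ e j)
    (hu : ∀ j, u j ≤ K + e j) (huu : ∀ j, u j * u (j + 1) = 0) (h5 : u 5 = u 0) :
    ∑ j ∈ range 5, u j ≤ 2 * K + ∑ j ∈ range 5, e j := by
  have huu (j : ℕ) := mul_eq_zero.mp (huu j)
  simp only [sum_range_succ, sum_range_zero]
  rcases huu 0 with h₀ | h₀ <;> rcases huu 1 with h₁ | h₁ <;> rcases huu 2 with h₂ | h₂ <;>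
    rcases huu 3 with h₃ | h₃ <;> rcases huu 4 with h₄ | h₄ <;>
    linarith [he 0, he 1, he 2, he 3, he 4, hu 0, hu 1, hu 2, hu 3, hu 4]

section FacetWeight

variable {I G 𝒳 : Type*} [Fintype I] [DecidableEq I] [Group G] [MulAction G 𝒳] {o : I}
  {v : (I → Bool) → 𝒳} {f : 𝒳 → ℝ} {b : Bool} {s : G}

/-- The total weight of the points `τ • v x` over the facet `x o = b` of the cube. -/
def facetWeight (o : I) (v : (I → Bool) → 𝒳) (f : 𝒳 → ℝ) (b : Bool) (τ : G) : ℝ :=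
  facetSum (fun x => f (τ • v x)) o b

theorem facetWeight_nonneg (hf : ∀ X, 0 ≤ f X) (b : Bool) (τ : G) : 0 ≤ facetWeight o v f b τ :=
  facetSum_nonneg (fun _ => hf _) o b

theorem facetWeight_le {α : ℝ} {τ : G} (hf : ∀ x, f (τ • v x) ≤ α) :
    facetWeight o v f b τ ≤ 2 ^ Fintype.card I / 2 * α := by
  rw [← card_facet o b, ← nsmul_eq_mul]
  exact sum_le_card_nsmul _ _ _ fun x _ => hf x

theorem facetWeight_mul_of_smul_eq (hs : ∀ x, x o = b → s • v x = v x) (τ : G) :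
    facetWeight o v f b (τ * s) = facetWeight o v f b τ :=
  facetSum_congr fun x hx => by rw [mul_smul, hs x hx]

theorem facetWeight_mul_pow_of_smul_eq (hs : ∀ x, x o = b → s • v x = v x) (τ : G) (j : ℕ) :
    facetWeight o v f b (τ * s ^ j) = facetWeight o v f b τ :=
  facetWeight_mul_of_smul_eq
    (fun x hx => (MulAction.stabilizer G (v x)).pow_mem (hs x hx) j) τ

theorem sum_abs_facetWeight_sub_mul_le [Fintype G] {H : G → ℝ} {s : I → G} {α γ η : ℝ}
    (hη : 0 ≤ η) (hf : ∀ X, 0 ≤ f X) (hfα : ∀ (τ : G) x, f (τ • v x) ≤ α) (hH : ∀ τ, 0 ≤ H τ)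
    (hHγ : ∀ τ, H τ ≤ γ) (hv : ∀ i x, s i • v x = v (x ∘ Equiv.swap o i))
    (hHs : ∀ i τ, H (τ * s i) = H τ) :
    (1 - η) * ∑ τ, |facetWeight o v f false τ - facetWeight o v f true τ| * H τ ≤
      2 * η * ∑ τ, facetWeight o v f false τ * H τ + Fintype.card G *
        (α * γ * 2 ^ Fintype.card I * Real.exp (-(η ^ 2 * Fintype.card I / 2))) :=
  sum_abs_facetSum_sub_mul_le o (Φ := fun τ x => f (τ • v x)) (σ := fun i => Equiv.mulRight (s i))
    hη (fun _ _ => hf _) hfα hH hHγ (fun i τ x => by simp [mul_smul, hv]) hHs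

end FacetWeight

/-- A real matrix `S`, invariant under a group `G`, with a family of rows and a family of
columns indexed by the cube `{0,1}^I`. When the distinguished bit `o` of a row and of a column is
`0`, the entry there is `2`, and the rotations of such a pair form a pentagon in which the entries
between consecutive pairs vanish; when both bits are `1`, the entry is `4`. The bit `o` is
exchangeable with every other bit of the rows by a symmetry that fixes all columns with bit `o`
equal to `0`, and symmetrically for the columns. -/
structure PentagonGadget {I : Type*} [DecidableEq I] (o : I) (G : Type*) [Group G]
    {𝒳 𝒴 : Type*} [MulAction G 𝒳] [MulAction G 𝒴] (S : 𝒳 → 𝒴 → ℝ) where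
  row : (I → Bool) → 𝒳
  col : (I → Bool) → 𝒴
  rowSwap : I → G
  colSwap : I → G
  rotation : G
  smul_smul (τ : G) (X : 𝒳) (Y : 𝒴) : S (τ • X) (τ • Y) = S X Y
  rowSwap_smul_row (i : I) (x : I → Bool) : rowSwap i • row x = row (x ∘ Equiv.swap o i)
  rowSwap_smul_col (i : I) (y : I → Bool) : y o = false → rowSwap i • col y = col y
  colSwap_smul_col (i : I) (y : I → Bool) : colSwap i • col y = col (y ∘ Equiv.swap o i)
  colSwap_smul_row (i : I) (x : I → Bool) : x o = false → colSwap i • row x = row x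
  rotation_pow_five : rotation ^ 5 = 1
  rotation_smul_row (x : I → Bool) : x o = true → rotation • row x = row x
  rotation_smul_col (y : I → Bool) : y o = true → rotation • col y = col y
  apply_row_rotation_smul_col (x y : I → Bool) :
    x o = false → y o = false → S (row x) (rotation • col y) = 0
  apply_row_col_of_false (x y : I → Bool) : x o = false → y o = false → S (row x) (col y) = 2
  apply_row_col_of_true (x y : I → Bool) : x o = true → y o = true → S (row x) (col y) = 4

namespace PentagonGadget

variable {I G 𝒳 𝒴 R : Type*} [Fintype I] [DecidableEq I] {o : I} [Group G] [Fintype G]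
  [MulAction G 𝒳] [MulAction G 𝒴] {S : 𝒳 → 𝒴 → ℝ} (𝒢 : PentagonGadget o G S)

section RankOne

variable {f : 𝒳 → ℝ} {g : 𝒴 → ℝ} (hf : ∀ X, 0 ≤ f X) (hg : ∀ Y, 0 ≤ g Y)
  (hS : ∀ X Y, f X * g Y ≤ S X Y)
include hf hg hS

omit [Fintype G] in
theorem facetWeight_row_mul_facetWeight_col_rotation (τ : G) :
    facetWeight o 𝒢.row f false τ * facetWeight o 𝒢.col g false (τ * 𝒢.rotation) = 0 := by
  simp only [facetWeight, facetSum, sum_mul_sum, mul_smul]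
  refine sum_eq_zero fun x hx => sum_eq_zero fun y hy => le_antisymm ?_ (mul_nonneg (hf _) (hg _))
  refine (hS _ _).trans_eq ?_
  rw [𝒢.smul_smul, 𝒢.apply_row_rotation_smul_col x y (mem_filter.mp hx).2 (mem_filter.mp hy).2]

theorem five_mul_sum_facetWeight_mul_le :
    5 * ∑ τ : G, facetWeight o 𝒢.row f false τ * facetWeight o 𝒢.col g false τ ≤
      2 * ∑ τ : G, facetWeight o 𝒢.row f true τ * facetWeight o 𝒢.col g true τ +
      5 * (∑ τ : G, |facetWeight o 𝒢.row f false τ - facetWeight o 𝒢.row f true τ| *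
          facetWeight o 𝒢.col g false τ +
        ∑ τ : G, |facetWeight o 𝒢.col g false τ - facetWeight o 𝒢.col g true τ| *
          facetWeight o 𝒢.row f false τ) := by
  have hF (b : Bool) (τ : G) : 0 ≤ facetWeight o 𝒢.row f b τ := facetWeight_nonneg hf b τ
  have hW (b : Bool) (τ : G) : 0 ≤ facetWeight o 𝒢.col g b τ := facetWeight_nonneg hg b τ
  have hFrot (τ : G) (j : ℕ) :
      facetWeight o 𝒢.row f true (τ * 𝒢.rotation ^ j) = facetWeight o 𝒢.row f true τ :=
    facetWeight_mul_pow_of_smul_eq 𝒢.rotation_smul_row τ j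
  have hWrot (τ : G) (j : ℕ) :
      facetWeight o 𝒢.col g true (τ * 𝒢.rotation ^ j) = facetWeight o 𝒢.col g true τ :=
    facetWeight_mul_pow_of_smul_eq 𝒢.rotation_smul_col τ j
  have hzero := 𝒢.facetWeight_row_mul_facetWeight_col_rotation hf hg hS
  generalize (facetWeight o 𝒢.row f : Bool → G → ℝ) = F at *
  generalize (facetWeight o 𝒢.col g : Bool → G → ℝ) = W at *
  set e : G → ℝ := fun τ => |F false τ - F true τ| * W false τ + |W false τ - W true τ| * F false τ
  have horbit (φ : G → ℝ) : ∑ τ, ∑ j ∈ range 5, φ (τ * 𝒢.rotation ^ j) = 5 * ∑ τ, φ τ := by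
    have hshift (j : ℕ) : ∑ τ, φ (τ * 𝒢.rotation ^ j) = ∑ τ, φ τ :=
      Equiv.sum_comp (Equiv.mulRight _) φ
    rw [sum_comm]
    simp [hshift]
  have hpentagon (τ : G) :
      ∑ j ∈ range 5, F false (τ * 𝒢.rotation ^ j) * W false (τ * 𝒢.rotation ^ j) ≤
        2 * (F true τ * W true τ) + ∑ j ∈ range 5, e (τ * 𝒢.rotation ^ j) := by
    refine sum_range_five_le (u := fun j => F false (τ * 𝒢.rotation ^ j) * _)
      (e := fun j => e (τ * 𝒢.rotation ^ j)) (mul_nonneg (hF _ _) (hW _ _))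
      (fun j => ?_) (fun j => ?_) (fun j => ?_) (by simp [𝒢.rotation_pow_five])
    · exact add_nonneg (mul_nonneg (abs_nonneg _) (hW _ _)) (mul_nonneg (abs_nonneg _) (hF _ _))
    · rw [← hFrot τ j, ← hWrot τ j, ← add_assoc]
      exact mul_le_mul_add_abs_sub_mul (hF _ _) (hW _ _) (hF _ _) (hW _ _)
    · have := hzero (τ * 𝒢.rotation ^ j)
      rw [mul_assoc τ, ← pow_succ] at this
      linear_combination W false (τ * 𝒢.rotation ^ j) * F false (τ * 𝒢.rotation ^ (j + 1)) * this
  have := sum_le_sum fun τ (_ : τ ∈ univ) => hpentagon τ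
  rw [horbit fun τ => F false τ * W false τ, sum_add_distrib, horbit, ← mul_sum] at this
  simpa only [e, sum_add_distrib] using this

/-- The exchangeability estimate is used with `η = 1/41`, so that `4η/(1-η) = 1/10`; the resulting
ratio `4/9` is less than the ratio `2/4` of the two entries of the gadget. -/
theorem nine_mul_sum_facetWeight_mul_le {α γ : ℝ}
    (hα : ∀ (τ : G) x, f (τ • 𝒢.row x) ≤ α) (hγ : ∀ (τ : G) y, g (τ • 𝒢.col y) ≤ γ) :
    9 * ∑ τ : G, facetWeight o 𝒢.row f false τ * facetWeight o 𝒢.col g false τ ≤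
      4 * ∑ τ : G, facetWeight o 𝒢.row f true τ * facetWeight o 𝒢.col g true τ +
      21 * (Fintype.card G * (α * γ * ((2 ^ Fintype.card I) ^ 2 / 2) *
        Real.exp (-((1 / 41) ^ 2 * Fintype.card I / 2)))) := by
  have hF := sum_abs_facetWeight_sub_mul_le (η := 1 / 41) (by norm_num) hf hα
    (facetWeight_nonneg hg false) (fun τ => facetWeight_le (hγ τ)) 𝒢.rowSwap_smul_row
    fun i τ => facetWeight_mul_of_smul_eq (𝒢.rowSwap_smul_col i) τ
  have hW := sum_abs_facetWeight_sub_mul_le (η := 1 / 41) (by norm_num) hg hγ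
    (facetWeight_nonneg hf false) (fun τ => facetWeight_le (hα τ)) 𝒢.colSwap_smul_col
    fun i τ => facetWeight_mul_of_smul_eq (𝒢.colSwap_smul_row i) τ
  simp only [mul_comm (facetWeight o 𝒢.col g false _) (facetWeight o 𝒢.row f false _)] at hW
  have hα0 : 0 ≤ α := (hf _).trans (hα 1 fun _ => true)
  have hγ0 : 0 ≤ γ := (hg _).trans (hγ 1 fun _ => true)
  have herr : 0 ≤ Fintype.card G * (α * γ * ((2 ^ Fintype.card I) ^ 2 / 2) *
      Real.exp (-((1 / 41) ^ 2 * Fintype.card I / 2))) := by positivity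
  linarith [𝒢.five_mul_sum_facetWeight_mul_le hf hg hS]

end RankOne

variable [Fintype R] {f : R → 𝒳 → ℝ} {g : R → 𝒴 → ℝ}
  (hfg : ∀ X Y, S X Y = ∑ r, f r X * g r Y)
include hfg

theorem sum_sum_facetWeight_mul_facetWeight {b : Bool} {t : ℝ}
    (ht : ∀ x y, x o = b → y o = b → S (𝒢.row x) (𝒢.col y) = t) :
    ∑ r, ∑ τ : G, facetWeight o 𝒢.row (f r) b τ * facetWeight o 𝒢.col (g r) b τ =
      Fintype.card G * ((2 ^ Fintype.card I / 2) * (2 ^ Fintype.card I / 2 * t)) := by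
  have hτ (τ : G) : ∑ r, facetWeight o 𝒢.row (f r) b τ * facetWeight o 𝒢.col (g r) b τ =
      (2 ^ Fintype.card I / 2) * (2 ^ Fintype.card I / 2 * t) := by
    calc _ = ∑ x with x o = b, ∑ y with y o = b, S (τ • 𝒢.row x) (τ • 𝒢.col y) := by
          simp only [facetWeight, facetSum, sum_mul_sum, hfg]
          rw [sum_comm]
          exact sum_congr rfl fun x _ => sum_comm
      _ = ∑ x : I → Bool with x o = b, ∑ y : I → Bool with y o = b, t :=
          sum_congr rfl fun x hx => sum_congr rfl fun y hy => by
            rw [𝒢.smul_smul, ht x y (mem_filter.mp hx).2 (mem_filter.mp hy).2]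
      _ = _ := by simp only [sum_const, nsmul_eq_mul, card_facet]
  rw [sum_comm, sum_congr rfl fun τ _ => hτ τ, sum_const, nsmul_eq_mul, card_univ]

omit [Fintype G] in
include 𝒢 in
theorem exp_le_of_nonneg_factorization [Finite G] {κ : ℝ} (hf : ∀ r X, 0 ≤ f r X)
    (hg : ∀ r Y, 0 ≤ g r Y) (hκ : ∀ X Y, S X Y ≤ κ) :
    Real.exp ((1 / 41) ^ 2 * Fintype.card I / 2) ≤ 21 * (Fintype.card R * κ) := by
  have := Fintype.ofFinite G
  have hS (r : R) (X : 𝒳) (Y : 𝒴) : f r X * g r Y ≤ S X Y := by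
    rw [hfg]
    exact single_le_sum (f := fun r => f r X * g r Y) (fun r _ => mul_nonneg (hf r X) (hg r Y))
      (mem_univ r)
  set N : ℝ := 2 ^ Fintype.card I
  set ε : ℝ := Real.exp (-((1 / 41) ^ 2 * Fintype.card I / 2)) with hε
  have hr (r : R) :
      9 * ∑ τ : G, facetWeight o 𝒢.row (f r) false τ * facetWeight o 𝒢.col (g r) false τ ≤
        4 * ∑ τ : G, facetWeight o 𝒢.row (f r) true τ * facetWeight o 𝒢.col (g r) true τ +
        21 * (Fintype.card G * (κ * (N ^ 2 / 2) * ε)) := by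
    obtain ⟨p, hp⟩ := Finite.exists_max fun p : G × (I → Bool) => f r (p.1 • 𝒢.row p.2)
    obtain ⟨q, hq⟩ := Finite.exists_max fun q : G × (I → Bool) => g r (q.1 • 𝒢.col q.2)
    refine (𝒢.nine_mul_sum_facetWeight_mul_le (hf r) (hg r) (hS r) (fun τ x => hp (τ, x))
      fun τ y => hq (τ, y)).trans ?_
    gcongr
    exact (hS r _ _).trans (hκ _ _)
  have hsum := sum_le_sum fun r (_ : r ∈ univ) => hr r
  rw [sum_add_distrib, ← mul_sum, ← mul_sum,
    𝒢.sum_sum_facetWeight_mul_facetWeight hfg 𝒢.apply_row_col_of_false,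
    𝒢.sum_sum_facetWeight_mul_facetWeight hfg 𝒢.apply_row_col_of_true, sum_const, card_univ,
    nsmul_eq_mul] at hsum
  have hpos : (0 : ℝ) < Fintype.card G * N ^ 2 / 2 := by positivity
  have hone : 1 ≤ 21 * (Fintype.card R * κ) * ε :=
    le_of_mul_le_mul_left (by linarith) hpos
  rwa [hε, Real.exp_neg, ← div_eq_mul_inv, one_le_div (Real.exp_pos _)] at hone

end PentagonGadget

end Pentagon

section Defects

section

variable (V : Type*)

/-- The vertex sets of odd cardinality, permuted by the permutations of the vertices. -/
abbrev OddSet : Type _ := {X : Finset V // Odd X.card}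

/-- The matchings on the complete graph with vertex set `V`, encoded as involutions whose fixed
points are the unmatched vertices. -/
abbrev Matching : Type _ := {π : V → V // Function.Involutive π}

end

variable {V : Type*}

instance : MulAction (Equiv.Perm V) (OddSet V) where
  smul τ X := ⟨X.1.map τ.toEmbedding, by simpa using X.2⟩
  one_smul X := Subtype.ext (map_refl (s := X.1))
  mul_smul σ τ X := Subtype.ext (map_map τ.toEmbedding σ.toEmbedding X.1).symm

theorem mem_perm_smul {τ : Equiv.Perm V} {X : OddSet V} {v : V} :
    v ∈ (τ • X).1 ↔ τ.symm v ∈ X.1 :=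
  mem_map_equiv

instance : MulAction (Equiv.Perm V) (Matching V) where
  smul τ π := ⟨τ ∘ π.1 ∘ τ.symm, fun v => by simp [π.2 _]⟩
  one_smul _ := rfl
  mul_smul _ _ _ := rfl

theorem perm_smul_apply (τ : Equiv.Perm V) (π : Matching V) (v : V) :
    (τ • π).1 v = τ (π.1 (τ.symm v)) :=
  rfl

variable [DecidableEq V]

/-- The vertices of `X` that the matching `π` leaves unmatched or matches to a vertex outside
`X`. -/
def defects (X : Finset V) (π : V → V) : Finset V :=
  {v ∈ X | π v = v ∨ π v ∉ X}

theorem mem_defects {X : Finset V} {π : V → V} {v : V} :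
    v ∈ defects X π ↔ v ∈ X ∧ (π v = v ∨ π v ∉ X) :=
  mem_filter

theorem card_defects_perm_smul (τ : Equiv.Perm V) (X : OddSet V) (π : Matching V) :
    (defects (τ • X).1 (τ • π).1).card = (defects X.1 π.1).card := by
  rw [← card_map τ.toEmbedding (s := defects X.1 π.1)]
  congr 1
  ext v
  simp [mem_defects, mem_perm_smul, perm_smul_apply, ← Equiv.eq_symm_apply]

end Defects

section Blocks

/-- The blocks of the gadget: a distinguished block `none`, and two families indexed by `ι`, the
first one used by the odd sets and the second one by the matchings. -/
abbrev Block (ι : Type*) : Type _ := Option (ι ⊕ ι)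

/-- The vertices of the gadget: three special ones, and two for every block. -/
abbrev BlockVertex (ι : Type*) : Type _ := Fin 3 ⊕ Block ι × Bool

variable {ι : Type*}

/-- The blocks contained in the odd set encoded by `x`. -/
def setBlocks (x : Option ι → Bool) : Block ι → Bool
  | none => x none
  | some (Sum.inl i) => x (some i)
  | some (Sum.inr _) => false

/-- The blocks whose two vertices are matched in the matching encoded by `y`. -/
def matchedBlocks (y : Option ι → Bool) : Block ι → Bool
  | none => !y none
  | some (Sum.inl _) => true
  | some (Sum.inr i) => !y (some i)

/-- The matching that matches the two vertices of each block in `D`. -/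
def blockMatching (D : Block ι → Bool) : Matching (BlockVertex ι) :=
  ⟨Sum.elim Sum.inl fun q => Sum.inr (q.1, if D q.1 then !q.2 else q.2), by
    rintro (i | ⟨q, b⟩)
    · rfl
    · by_cases h : D q = true <;> simp [h]⟩

/-- The permutation of the vertices induced by a permutation of the blocks. -/
def blockPerm (s : Equiv.Perm (Block ι)) : Equiv.Perm (BlockVertex ι) :=
  Equiv.sumCongr (Equiv.refl _) (Equiv.prodCongr s (Equiv.refl _))

theorem blockPerm_smul_blockMatching (s : Equiv.Perm (Block ι)) (D : Block ι → Bool) :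
    blockPerm s • blockMatching D = blockMatching (D ∘ s.symm) := by
  ext (i | q) : 2
  · rfl
  · simp [perm_smul_apply, blockPerm, blockMatching]

theorem comp_swap_of_eq {α β : Type*} [DecidableEq α] {D : α → β} {a b : α} (h : D a = D b) :
    D ∘ Equiv.swap a b = D := by
  ext c
  grind

section Swap

variable [DecidableEq ι]

theorem setBlocks_comp_swap_inl (x : Option ι → Bool) (i : Option ι) :
    setBlocks x ∘ Equiv.swap none (i.map Sum.inl) = setBlocks (x ∘ Equiv.swap none i) := by
  ext (_ | j | j) <;> cases i <;> grind [setBlocks]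

theorem matchedBlocks_comp_swap_inr (y : Option ι → Bool) (i : Option ι) :
    matchedBlocks y ∘ Equiv.swap none (i.map Sum.inr) = matchedBlocks (y ∘ Equiv.swap none i) := by
  ext (_ | j | j) <;> cases i <;> grind [matchedBlocks]

theorem setBlocks_comp_swap_inr {x : Option ι → Bool} (hx : x none = false) (i : Option ι) :
    setBlocks x ∘ Equiv.swap none (i.map Sum.inr) = setBlocks x :=
  comp_swap_of_eq (by cases i <;> simp [setBlocks, hx])

theorem matchedBlocks_comp_swap_inl {y : Option ι → Bool} (hy : y none = false) (i : Option ι) :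
    matchedBlocks y ∘ Equiv.swap none (i.map Sum.inl) = matchedBlocks y :=
  comp_swap_of_eq (by cases i <;> simp [matchedBlocks, hy])

end Swap

section FiveCycle

variable (ι) in
/-- The special vertices and the two vertices of the distinguished block, in cyclic order. -/
def pentagon : List (BlockVertex ι) :=
  [Sum.inl 0, Sum.inr (none, false), Sum.inl 1, Sum.inr (none, true), Sum.inl 2]

theorem nodup_pentagon : (pentagon ι).Nodup := by
  simp [pentagon]

theorem inl_mem_pentagon (i : Fin 3) : Sum.inl i ∈ pentagon ι := by
  fin_cases i <;> simp [pentagon]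

theorem inr_mem_pentagon {q : Block ι} {b : Bool} : Sum.inr (q, b) ∈ pentagon ι ↔ q = none := by
  cases b <;> simp [pentagon]

variable [DecidableEq ι]

variable (ι) in
/-- The rotation of the pentagon. -/
def fiveCycle : Equiv.Perm (BlockVertex ι) :=
  (pentagon ι).formPerm

theorem fiveCycle_mem_pentagon {v : BlockVertex ι} (hv : v ∈ pentagon ι) :
    fiveCycle ι v ∈ pentagon ι :=
  List.formPerm_apply_mem_of_mem hv

theorem fiveCycle_of_notMem_pentagon {v : BlockVertex ι} (hv : v ∉ pentagon ι) :
    fiveCycle ι v = v :=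
  List.formPerm_apply_of_notMem hv

theorem fiveCycle_pow_five : fiveCycle ι ^ 5 = 1 :=
  List.formPerm_pow_length_eq_one_of_nodup (pentagon ι) nodup_pentagon

theorem fiveCycle_smul_blockMatching {D : Block ι → Bool} (h : D none = false) :
    fiveCycle ι • blockMatching D = blockMatching D := by
  have hfix (v : BlockVertex ι) (hv : v ∈ pentagon ι) : (blockMatching D).1 v = v := by
    rcases v with i | ⟨q, b⟩
    · rfl
    · simp [blockMatching, inr_mem_pentagon.mp hv, h]
  have hmem (v : BlockVertex ι) : (blockMatching D).1 v ∈ pentagon ι ↔ v ∈ pentagon ι := by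
    rcases v with i | ⟨q, b⟩
    · rfl
    · simp [blockMatching, inr_mem_pentagon]
  refine Subtype.ext (funext ((fiveCycle ι).forall_congr_right.mp fun v => ?_))
  rw [perm_smul_apply, Equiv.symm_apply_apply]
  by_cases hv : v ∈ pentagon ι
  · rw [hfix v hv, hfix _ (fiveCycle_mem_pentagon hv)]
  · rw [fiveCycle_of_notMem_pentagon hv, fiveCycle_of_notMem_pentagon (by rwa [hmem])]

end FiveCycle

variable [Fintype ι]

/-- The special vertices together with the blocks in `D`. -/
def blockSet (D : Block ι → Bool) : OddSet (BlockVertex ι) :=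
  ⟨univ.disjSum (univ.filter (D · = true) ×ˢ univ), by
    rw [card_disjSum, card_product]
    exact Odd.add_even (by decide) (Even.mul_left even_two _)⟩

theorem inl_mem_blockSet (D : Block ι → Bool) (i : Fin 3) : Sum.inl i ∈ (blockSet D).1 := by
  simp [blockSet]

theorem inr_mem_blockSet {D : Block ι → Bool} {q : Block ι × Bool} :
    Sum.inr q ∈ (blockSet D).1 ↔ D q.1 = true := by
  simp [blockSet]

theorem blockPerm_smul_blockSet (s : Equiv.Perm (Block ι)) (D : Block ι → Bool) :
    blockPerm s • blockSet D = blockSet (D ∘ s.symm) := by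
  ext (i | q) <;> simp [mem_perm_smul, blockPerm, inl_mem_blockSet, inr_mem_blockSet]

variable [DecidableEq ι]

theorem fiveCycle_smul_blockSet {D : Block ι → Bool} (h : D none = true) :
    fiveCycle ι • blockSet D = blockSet D := by
  have hpentagon (v : BlockVertex ι) (hv : v ∈ pentagon ι) : v ∈ (blockSet D).1 := by
    rcases v with i | ⟨q, b⟩
    · exact inl_mem_blockSet D i
    · rw [inr_mem_blockSet, inr_mem_pentagon.mp hv, h]
  ext v
  rw [mem_perm_smul]
  obtain ⟨v, rfl⟩ := (fiveCycle ι).surjective v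
  rw [Equiv.symm_apply_apply]
  by_cases hv : v ∈ pentagon ι
  · simp only [hpentagon v hv, hpentagon _ (fiveCycle_mem_pentagon hv)]
  · rw [fiveCycle_of_notMem_pentagon hv]

theorem card_defects_of_false {x y : Option ι → Bool} (hx : x none = false) :
    (defects (blockSet (setBlocks x)).1 (blockMatching (matchedBlocks y)).1).card = 3 := by
  have : defects (blockSet (setBlocks x)).1 (blockMatching (matchedBlocks y)).1 =
      univ.map Function.Embedding.inl := by
    ext (i | ⟨_ | i | i, _ | _⟩) <;>
      simp [mem_defects, inl_mem_blockSet, inr_mem_blockSet, blockMatching, setBlocks,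
        matchedBlocks, hx]
  simp [this]

theorem card_defects_of_true {x y : Option ι → Bool} (hx : x none = true) (hy : y none = true) :
    (defects (blockSet (setBlocks x)).1 (blockMatching (matchedBlocks y)).1).card = 5 := by
  have : defects (blockSet (setBlocks x)).1 (blockMatching (matchedBlocks y)).1 =
      (pentagon ι).toFinset := by
    ext (i | ⟨_ | i | i, _ | _⟩) <;>
      simp [mem_defects, inl_mem_blockSet, inr_mem_blockSet, blockMatching, setBlocks,
        matchedBlocks, inl_mem_pentagon, inr_mem_pentagon, hx, hy]
  rw [this, List.toFinset_card_of_nodup nodup_pentagon]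
  rfl

theorem card_defects_fiveCycle_smul {x y : Option ι → Bool} (hx : x none = false)
    (hy : y none = false) :
    (defects (blockSet (setBlocks x)).1
      (fiveCycle ι • blockMatching (matchedBlocks y)).1).card = 1 := by
  refine card_eq_one.mpr ⟨Sum.inl 0, ?_⟩
  ext v
  obtain ⟨v, rfl⟩ := (fiveCycle ι).surjective v
  rw [mem_defects, perm_smul_apply, Equiv.symm_apply_apply]
  rcases v with i | ⟨_ | i | i, _ | _⟩
  · fin_cases i
    all_goals simp [fiveCycle, pentagon, Equiv.swap_apply_def, inl_mem_blockSet,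
      inr_mem_blockSet, blockMatching, setBlocks, matchedBlocks, hx, hy]
  all_goals simp [fiveCycle, pentagon, Equiv.swap_apply_def, inl_mem_blockSet,
    inr_mem_blockSet, blockMatching, setBlocks, matchedBlocks, hy]

/-- The gadget formed by the odd sets and the matchings, with the slack of the odd-set
inequalities of the matching polytope as entries, up to a factor `2`. -/
def defectGadget : PentagonGadget (none : Option ι) (Equiv.Perm (BlockVertex ι))
    fun (X : OddSet (BlockVertex ι)) (π : Matching (BlockVertex ι)) =>
      ((defects X.1 π.1).card - 1 : ℝ) where
  row x := blockSet (setBlocks x)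
  col y := blockMatching (matchedBlocks y)
  rowSwap i := blockPerm (Equiv.swap none (i.map Sum.inl))
  colSwap i := blockPerm (Equiv.swap none (i.map Sum.inr))
  rotation := fiveCycle ι
  smul_smul τ X π := by rw [card_defects_perm_smul]
  rowSwap_smul_row i x := by
    rw [blockPerm_smul_blockSet, Equiv.symm_swap, setBlocks_comp_swap_inl]
  rowSwap_smul_col i y hy := by
    rw [blockPerm_smul_blockMatching, Equiv.symm_swap, matchedBlocks_comp_swap_inl hy]
  colSwap_smul_col i y := by
    rw [blockPerm_smul_blockMatching, Equiv.symm_swap, matchedBlocks_comp_swap_inr]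
  colSwap_smul_row i x hx := by
    rw [blockPerm_smul_blockSet, Equiv.symm_swap, setBlocks_comp_swap_inr hx]
  rotation_pow_five := fiveCycle_pow_five
  rotation_smul_row x hx := fiveCycle_smul_blockSet hx
  rotation_smul_col y hy := fiveCycle_smul_blockMatching (by simp [matchedBlocks, hy])
  apply_row_rotation_smul_col x y hx hy := by simp [card_defects_fiveCycle_smul hx hy]
  apply_row_col_of_false x y hx _ := by norm_num [card_defects_of_false hx]
  apply_row_col_of_true x y hx hy := by norm_num [card_defects_of_true hx hy]

end Blocks

section Scheduling

variable {V : Type*}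

/-- The processing times of the instance with vertex set `V`, whose jobs are a unit job `inl v` and
a long job `inr v` for every vertex `v`. Its machines are indexed by `V ⊕ V` as well, and `inl v` is
the home machine of `v`. -/
def jobSize : V ⊕ V → ℕ :=
  Sum.elim (fun _ => 1) fun _ => 2

section Matching

/-- One of the two ends of the edge joining `v` to `π v`, the same for both of them. -/
def edgeHead (π : V → V) (v : V) : V :=
  s(v, π v).out.1

theorem edgeHead_eq_or (π : V → V) (v : V) : edgeHead π v = v ∨ edgeHead π v = π v :=
  Sym2.mem_iff.mp (Sym2.out_fst_mem s(v, π v))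

theorem edgeHead_apply {π : V → V} (hπ : Function.Involutive π) (v : V) :
    edgeHead π (π v) = edgeHead π v := by
  rw [edgeHead, hπ v, Sym2.eq_swap, edgeHead]

theorem edgeHead_edgeHead {π : V → V} (hπ : Function.Involutive π) (v : V) :
    edgeHead π (edgeHead π v) = edgeHead π v := by
  rcases edgeHead_eq_or π v with h | h
  · rw [h, h]
  · rw [h, edgeHead_apply hπ, h]

end Matching

variable [DecidableEq V]

/-- The unit jobs of vertices in `X` that run on the home machine of another vertex in `X`. -/
def moves (X : Finset V) (s : V ⊕ V → V ⊕ V) : Finset (V ⊕ V) :=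
  {j ∈ X.map .inl | s j ∈ X.map .inl ∧ s j ≠ j}

theorem card_moves_le (X : Finset V) (s : V ⊕ V → V ⊕ V) : (moves X s).card ≤ X.card :=
  (card_filter_le _ _).trans_eq (card_map _)

variable [Fintype V]

/-- The jobs that claim a home machine: the unit jobs at home and the long jobs on a home
machine. -/
def claims (s : V ⊕ V → V ⊕ V) : Finset (V ⊕ V) :=
  {j | (s j).isLeft ∧ (s j = j ∨ j.isRight)}

theorem mem_claims {s : V ⊕ V → V ⊕ V} {j : V ⊕ V} :
    j ∈ claims s ↔ (s j).isLeft ∧ (s j = j ∨ j.isRight) :=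
  mem_filter_univ j

theorem image_claims_subset (s : V ⊕ V → V ⊕ V) : (claims s).image s ⊆ univ.map .inl := by
  refine image_subset_iff.mpr fun j hj => ?_
  obtain ⟨v, hv⟩ := Sum.isLeft_iff.mp (mem_filter.mp hj).2.1
  simp [hv]

/-- All loads of the schedule `s` are at most two. -/
def IsFeasible (s : V ⊕ V → V ⊕ V) : Prop :=
  ∀ i, ∑ j with s j = i, jobSize j ≤ 2

namespace IsFeasible

variable {s : V ⊕ V → V ⊕ V} (hs : IsFeasible s)
include hs

theorem sum_jobSize_le {T : Finset (V ⊕ V)} {i : V ⊕ V} (hT : ∀ j ∈ T, s j = i) :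
    ∑ j ∈ T, jobSize j ≤ 2 :=
  (sum_le_sum_of_subset fun j hj => by simp [hT j hj]).trans (hs i)

theorem eq_inr_of_apply_eq {w : V} {j : V ⊕ V} (h : s j = s (Sum.inr w)) : j = Sum.inr w := by
  by_contra hne
  have := hs.sum_jobSize_le (T := {j, Sum.inr w}) (i := s j) (by simp [h])
  rw [sum_pair hne] at this
  cases j <;> simp [jobSize] at this

theorem eq_of_apply_eq_of_ne {a b c : V ⊕ V} (hb : s b = s a) (hc : s c = s a) (hab : b ≠ a)
    (hac : c ≠ a) : b = c := by
  by_contra hbc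
  have := hs.sum_jobSize_le (T := {a, b, c}) (i := s a) (by simp [hb, hc])
  rw [sum_insert (by simp [hab.symm, hac.symm]), sum_pair hbc] at this
  cases a <;> cases b <;> cases c <;> simp [jobSize] at this

theorem injOn_claims : Set.InjOn s (claims s) := by
  intro j hj j' hj' h
  rcases j with v | v <;> rcases j' with w | w
  · simp_all [claims]
  · exact hs.eq_inr_of_apply_eq h
  · exact (hs.eq_inr_of_apply_eq h.symm).symm
  · exact hs.eq_inr_of_apply_eq h

theorem card_claims_le : (claims s).card ≤ Fintype.card V := by
  rw [← card_image_of_injOn hs.injOn_claims, ← card_univ,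
    ← card_map (.inl : V ↪ V ⊕ V) (s := univ)]
  exact card_le_card (image_claims_subset s)

theorem apply_apply_of_mem_moves (hclaims : (claims s).card = Fintype.card V) {X : Finset V}
    {j : V ⊕ V} (hj : j ∈ moves X s) : s (s j) = s j := by
  have himage : (claims s).image s = univ.map .inl :=
    eq_of_subset_of_card_le (image_claims_subset s) <| by
      rw [card_image_of_injOn hs.injOn_claims, card_map, hclaims, card_univ]
  obtain ⟨hjX, hsjX, -⟩ := mem_filter.mp hj
  obtain ⟨u, -, rfl⟩ := mem_map.mp hjX
  obtain ⟨v, -, hv⟩ := mem_map.mp hsjX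
  obtain ⟨k, hk, hsk⟩ := mem_image.mp (himage ▸ mem_map_of_mem .inl (mem_univ v))
  rw [hv] at hsk
  rcases (mem_filter.mp hk).2.2 with hhome | hlong
  · rw [← hsk, hhome, hhome]
  · obtain ⟨w, rfl⟩ := Sum.isRight_iff.mp hlong
    simpa using hs.eq_inr_of_apply_eq hsk.symm

/-- If every home machine is claimed, then `s` maps each unit job moved within `X` to a vertex of
`X` whose unit job stays at home, and different moved jobs to different vertices. -/
theorem two_mul_card_moves_lt (hclaims : (claims s).card = Fintype.card V) {X : Finset V}
    (hX : Odd X.card) : 2 * (moves X s).card < X.card := by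
  have hfix {j : V ⊕ V} (hj : j ∈ moves X s) : s (s j) = s j :=
    hs.apply_apply_of_mem_moves hclaims hj
  have hmoves {j : V ⊕ V} (hj : j ∈ moves X s) := (mem_filter.mp hj).2
  have hle : (moves X s).card ≤ (X.map .inl \ moves X s).card := by
    refine card_le_card_of_injOn s (fun j hj => ?_) fun j hj k hk hjk => ?_
    · simpa [moves, hfix hj] using (hmoves hj).1
    · refine hs.eq_of_apply_eq_of_ne (a := s j) (hfix hj).symm ?_ (hmoves hj).2.symm ?_
      · rw [hfix hj, hjk]
      · rw [hjk]
        exact (hmoves hk).2.symm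
  rw [card_sdiff_of_subset (show moves X s ⊆ _ from filter_subset _ _), card_map] at hle
  have := card_moves_le X s
  obtain ⟨k, hk⟩ := hX
  omega

end IsFeasible

theorem moves_add_claims_le {s : V ⊕ V → V ⊕ V} {X : Finset V} (hX : Odd X.card) {d : ℕ}
    (hs : d = 0 → IsFeasible s) :
    2 * (moves X s).card + 1 + 2 * Fintype.card V * (claims s).card ≤
      X.card + 2 * Fintype.card V ^ 2 + (2 * Fintype.card V + 2 * Fintype.card V ^ 2) * d := by
  have hmoves := card_moves_le X s
  have hXV := card_le_univ X
  have hX1 := hX.pos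
  have hclaims : (claims s).card ≤ 2 * Fintype.card V := by
    simpa [two_mul] using card_le_univ (claims s)
  rcases d.eq_zero_or_pos with hd | hd
  · have hclaims := (hs hd).card_claims_le
    rcases hclaims.eq_or_lt with heq | hlt
    · have := (hs hd).two_mul_card_moves_lt heq hX
      rw [heq]
      nlinarith
    · nlinarith
  · nlinarith [Nat.mul_le_mul_left (2 * Fintype.card V + 2 * Fintype.card V ^ 2) hd]

section MatchingSchedule

/-- The schedule of a matching `π`: the unit jobs of two matched vertices share the home machine of
one of them, and the home machine of the other one runs the long job of that vertex. -/
def matchingSchedule (π : V → V) : V ⊕ V → V ⊕ V :=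
  Sum.elim (fun v => .inl (edgeHead π v)) fun w => if edgeHead π w = w then .inr w else .inl w

variable {π : V → V}

theorem card_claims_matchingSchedule : (claims (matchingSchedule π)).card = Fintype.card V := by
  have : claims (matchingSchedule π) =
      ({v | edgeHead π v = v} : Finset V).disjSum {v | edgeHead π v ≠ v} := by
    ext (v | v)
    · simp [mem_claims, matchingSchedule]
    · by_cases h : edgeHead π v = v <;> simp [mem_claims, matchingSchedule, h]
  rw [this, card_disjSum, card_filter_add_card_filter_not, card_univ]

variable (hπ : Function.Involutive π)
include hπ

theorem isFeasible_matchingSchedule : IsFeasible (matchingSchedule π) := by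
  intro i
  obtain ⟨T, hT, hT2⟩ : ∃ T : Finset (V ⊕ V),
      (∀ j, matchingSchedule π j = i → j ∈ T) ∧ ∑ j ∈ T, jobSize j ≤ 2 := by
    rcases i with v | v
    · by_cases hv : edgeHead π v = v
      · refine ⟨({v, π v} : Finset V).map .inl, ?_,
          by rw [sum_map]; simpa [jobSize] using card_le_two⟩
        rintro (u | w) hj
        · have hu : edgeHead π u = v := by simpa [matchingSchedule] using hj
          rcases edgeHead_eq_or π u with h | h
          · simp [← hu, h]
          · simp [← hu, h, hπ u]
        · by_cases hw : edgeHead π w = w <;> simp_all [matchingSchedule]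
      · refine ⟨{.inr v}, ?_, by simp [jobSize]⟩
        rintro (u | w) hj
        · have hu : edgeHead π u = v := by simpa [matchingSchedule] using hj
          exact absurd (hu ▸ edgeHead_edgeHead hπ u) hv
        · by_cases hw : edgeHead π w = w <;> simp_all [matchingSchedule]
    · refine ⟨{.inr v}, ?_, by simp [jobSize]⟩
      rintro (u | w) hj
      · simp [matchingSchedule] at hj
      · by_cases hw : edgeHead π w = w <;> simp_all [matchingSchedule]
  exact (sum_le_sum_of_subset fun j hj => hT j (mem_filter.mp hj).2).trans hT2

omit [Fintype V] in
theorem card_eq_card_defects_add (X : Finset V) :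
    X.card = (defects X π).card + 2 * (moves X (matchingSchedule π)).card := by
  set A : Finset V := {v ∈ X | ¬(π v = v ∨ π v ∉ X)} with hA
  have hmoves : (moves X (matchingSchedule π)).card = ({v ∈ A | ¬edgeHead π v = v}).card := by
    rw [← card_map (.inl : V ↪ V ⊕ V)]
    congr 1
    ext (v | v)
    · rcases edgeHead_eq_or π v with h | h <;> simp [moves, matchingSchedule, hA, h]
      tauto
    · simp [moves]
  have hswap : ({v ∈ A | edgeHead π v = v}).card = ({v ∈ A | ¬edgeHead π v = v}).card := by
    refine card_nbij' π π ?_ ?_ (fun v _ => hπ v) fun v _ => hπ v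
    · intro v
      simp only [hA, coe_filter, mem_filter, Set.mem_ofPred_eq, edgeHead_apply hπ, hπ v]
      rintro ⟨⟨hv, hv'⟩, h⟩
      rw [h]
      tauto
    · intro v
      simp only [hA, coe_filter, mem_filter, Set.mem_ofPred_eq, edgeHead_apply hπ, hπ v]
      rintro ⟨⟨hv, hv'⟩, h⟩
      have := (edgeHead_eq_or π v).resolve_left h
      tauto
  have hXA : (defects X π).card + A.card = X.card := card_filter_add_card_filter_not _
  have := card_filter_add_card_filter_not (s := A) fun v => edgeHead π v = v
  omega

end MatchingSchedule

end Scheduling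

/-- The point of `P(J,M)` given by a schedule `σ` and a bound `t` on its makespan. -/
def schedulePoint {n m : ℕ} (σ : Fin n → Fin m) (t : ℝ) : Option (Fin m × Fin n) → ℝ :=
  fun q => Option.elim q t fun ij => assignVec σ ij

theorem le_makespan {n m : ℕ} (p : Fin n → ℕ) (σ : Fin n → Fin m) (j : Fin n) :
    p j ≤ makespan p σ := by
  refine le_trans ?_ (le_sup (mem_univ (σ j)))
  rw [load, ← sum_filter]
  exact single_le_sum_of_canonicallyOrdered (by simp)

theorem two_le_makespan {V : Type*} [Nonempty V] {M : ℕ} (e : V ⊕ V ≃ Fin M) (σ : Fin M → Fin M) :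
    2 ≤ makespan (jobSize ∘ e.symm) σ := by
  obtain ⟨v⟩ := ‹Nonempty V›
  simpa [jobSize] using le_makespan (jobSize ∘ e.symm) σ (e (.inr v))

section Transport

variable {V : Type*} [Fintype V] [DecidableEq V] {M : ℕ} (e : V ⊕ V ≃ Fin M)

theorem load_conj (s : V ⊕ V → V ⊕ V) (i : V ⊕ V) :
    load (jobSize ∘ e.symm) (e.conj s) (e i) = ∑ j with s j = i, jobSize j := by
  rw [load, ← e.sum_comp, sum_filter]
  simp [Equiv.conj_apply]

theorem makespan_conj_le_two_iff {s : V ⊕ V → V ⊕ V} :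
    makespan (jobSize ∘ e.symm) (e.conj s) ≤ 2 ↔ IsFeasible s := by
  simp [makespan, ← e.forall_congr_right, load_conj, IsFeasible]

omit [Fintype V] in
theorem makespan_conj_matchingSchedule [Nonempty V] {π : V → V} (hπ : Function.Involutive π) :
    makespan (jobSize ∘ e.symm) (e.conj (matchingSchedule π)) = 2 := by
  have : Finite V := .of_injective _ (e.injective.comp Sum.inl_injective)
  have := Fintype.ofFinite V
  exact ((makespan_conj_le_two_iff e).mpr (isFeasible_matchingSchedule hπ)).antisymm
    (two_le_makespan e _)

omit [Fintype V] [DecidableEq V] in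
theorem optMakespan_jobSize [Nonempty V] : optMakespan M M (jobSize ∘ e.symm) = 2 := by
  classical
  have hid := makespan_conj_matchingSchedule e (π := id) fun _ => rfl
  refine le_antisymm (Nat.sInf_le ⟨_, hid⟩) (le_csInf ⟨2, _, hid⟩ ?_)
  rintro _ ⟨σ, rfl⟩
  exact two_le_makespan e σ

/-- The coefficient of the separating functional of `X` at machine `i` and job `j`: every claim
contributes `-2 |V|` and every move within `X` contributes `-2`. -/
def separatorCoeff (X : Finset V) (i j : V ⊕ V) : ℝ :=
  -(2 * Fintype.card V) * (if i.isLeft ∧ (i = j ∨ j.isRight) then 1 else 0) -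
    2 * (if j ∈ X.map .inl ∧ i ∈ X.map .inl ∧ i ≠ j then 1 else 0)

theorem sum_separatorCoeff (X : Finset V) (s : V ⊕ V → V ⊕ V) :
    ∑ j, separatorCoeff X (s j) j =
      -(2 * Fintype.card V) * (claims s).card - 2 * (moves X s).card := by
  simp_rw [separatorCoeff, sum_sub_distrib, ← mul_sum, sum_boole]
  congr 4
  ext j
  simp only [moves, mem_filter, mem_univ, true_and]

/-- The affine functional whose values on the points of schedules of makespan at most two are
`|X| - 1 - 2 * #moves` plus a penalty `2 |V|` for each home machine that is not claimed. A larger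
makespan outweighs all of these terms. -/
def separator (X : Finset V) : (Option (Fin M × Fin M) → ℝ) →ᵃ[ℝ] ℝ :=
  (Fintype.linearCombination ℝ fun q : Option (Fin M × Fin M) =>
      q.elim (2 * Fintype.card V + 2 * Fintype.card V ^ 2 : ℝ) fun ij =>
        separatorCoeff X (e.symm ij.1) (e.symm ij.2)).toAffineMap +
    AffineMap.const ℝ _
      (X.card - 1 + 2 * Fintype.card V ^ 2 - 2 * (2 * Fintype.card V + 2 * Fintype.card V ^ 2) : ℝ)

theorem separator_schedulePoint (X : Finset V) (s : V ⊕ V → V ⊕ V) (t : ℝ) :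
    separator e X (schedulePoint (e.conj s) t) =
      X.card - 1 + 2 * Fintype.card V ^ 2 - 2 * Fintype.card V * (claims s).card -
        2 * (moves X s).card + (2 * Fintype.card V + 2 * Fintype.card V ^ 2) * (t - 2) := by
  have hassign : ∑ ij : Fin M × Fin M,
      assignVec (e.conj s) ij * separatorCoeff X (e.symm ij.1) (e.symm ij.2) =
        ∑ j, separatorCoeff X (s j) j := by
    rw [Fintype.sum_prod_type_right, ← e.sum_comp]
    simp [assignVec, Equiv.conj_apply]
  rw [sum_separatorCoeff] at hassign
  simp only [separator, AffineMap.coe_add, Pi.add_apply, LinearMap.coe_toAffineMap,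
    AffineMap.const_apply, Fintype.linearCombination_apply, Fintype.sum_option, schedulePoint,
    Option.elim_none, Option.elim_some, smul_eq_mul, hassign]
  ring

theorem separator_nonneg [Nonempty V] {X : Finset V} (hX : Odd X.card)
    {z : Option (Fin M × Fin M) → ℝ} (hz : z ∈ Ppoly M M (jobSize ∘ e.symm)) :
    0 ≤ separator e X z := by
  refine convexHull_min ?_ ((convex_Ici 0).affine_preimage (separator e X)) hz
  rintro _ ⟨σ, t, ht, rfl⟩
  change 0 ≤ separator e X (schedulePoint σ t)
  have hσ : makespan (jobSize ∘ e.symm) σ ≤ t := Finset.sup_le fun i _ => ht i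
  obtain ⟨d, rfl⟩ := Nat.exists_eq_add_of_le ((two_le_makespan e σ).trans hσ)
  obtain ⟨s, rfl⟩ := e.conj.surjective σ
  have hle := moves_add_claims_le hX (s := s) (d := d) fun hd =>
    (makespan_conj_le_two_iff e).mp (by simpa [hd] using hσ)
  rw [separator_schedulePoint]
  have hle' : (_ : ℝ) ≤ _ := Nat.cast_le.mpr hle
  push_cast at hle' ⊢
  linarith

theorem separator_matchingSchedule (X : Finset V) {π : V → V} (hπ : Function.Involutive π) :
    separator e X (schedulePoint (e.conj (matchingSchedule π)) 2) = (defects X π).card - 1 := by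
  rw [separator_schedulePoint, card_claims_matchingSchedule, card_eq_card_defects_add hπ X]
  push_cast
  ring

end Transport

theorem card_blockVertex (ι : Type*) [Fintype ι] :
    Fintype.card (BlockVertex ι) = 4 * Fintype.card ι + 5 := by
  simp only [Fintype.card_sum, Fintype.card_fin, Fintype.card_prod, Fintype.card_option,
    Fintype.card_bool]
  ring

theorem exp_le_of_isEF {ι : Type*} [Fintype ι] {M : ℕ}
    (e : BlockVertex ι ⊕ BlockVertex ι ≃ Fin M) {P : Set (Option (Fin M × Fin M) → ℝ)} {k : ℕ}
    (hP : IsEF P k) (hsub : P ⊆ Ppoly M M (jobSize ∘ e.symm))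
    (hopt : ∀ σ, makespan (jobSize ∘ e.symm) σ = 2 → schedulePoint σ 2 ∈ P) :
    Real.exp ((1 / 41) ^ 2 * (Fintype.card ι + 1) / 2) ≤
      21 * ((k + 1) * (4 * Fintype.card ι + 5)) := by
  classical
  obtain ⟨f, g, hf, hg, hfg⟩ := hP.exists_nonneg_factorization
    (fun X : OddSet (BlockVertex ι) => separator e X.1)
    (fun X z hz => separator_nonneg e X.2 (hsub hz))
    (fun π : Matching (BlockVertex ι) => schedulePoint (e.conj (matchingSchedule π.1)) 2)
    (fun π => hopt _ (makespan_conj_matchingSchedule e π.2))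
  have hslack (X : OddSet (BlockVertex ι)) (π : Matching (BlockVertex ι)) :
      ((defects X.1 π.1).card - 1 : ℝ) ≤ 4 * Fintype.card ι + 5 := by
    have hle := (card_filter_le X.1 _ : (defects X.1 π.1).card ≤ _).trans (card_le_univ X.1)
    rw [card_blockVertex] at hle
    have : ((defects X.1 π.1).card : ℝ) ≤ 4 * Fintype.card ι + 5 := by exact_mod_cast hle
    linarith
  have := defectGadget.exp_le_of_nonneg_factorization
    (fun X π => (separator_matchingSchedule e X.1 π.2).symm.trans (hfg X π)) hf hg hslack
  simpa using this

section Constants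

theorem two_pow_le_of_exp_le {n k : ℕ} (hn : 1 ≤ n)
    (h : Real.exp ((1 / 41) ^ 2 * ((10 ^ 5 * n : ℕ) + 1) / 2) ≤
      21 * ((k + 1) * (4 * (10 ^ 5 * n : ℕ) + 5))) : 2 ^ n ≤ k := by
  by_contra! hk
  have hn' : (1 : ℝ) ≤ n := by exact_mod_cast hn
  have hk' : (k + 1 : ℝ) ≤ 2 ^ n := by exact_mod_cast hk
  have hlower : (2 : ℝ) ^ (29 * n) ≤ Real.exp ((1 / 41) ^ 2 * ((10 ^ 5 * n : ℕ) + 1) / 2) :=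
    calc (2 : ℝ) ^ (29 * n) ≤ Real.exp 1 ^ (29 * n) := by
          gcongr
          linarith [Real.add_one_le_exp 1]
      _ = Real.exp (29 * n) := by rw [← Real.exp_nat_mul, mul_one]; push_cast; rfl
      _ ≤ _ := Real.exp_le_exp.mpr (by push_cast; linarith)
  have hupper : 21 * ((k + 1) * (4 * (10 ^ 5 * n : ℕ) + 5) : ℝ) < 2 ^ (29 * n) :=
    calc 21 * ((k + 1) * (4 * (10 ^ 5 * n : ℕ) + 5) : ℝ)
        = (k + 1) * (21 * (4 * (10 ^ 5 * n : ℕ) + 5)) := by ring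
      _ ≤ 2 ^ n * (2 ^ 24 * n) :=
          mul_le_mul hk' (by push_cast; linarith) (by positivity) (by positivity)
      _ < 2 ^ n * (2 ^ 24 * 2 ^ n) := by
          gcongr
          exact_mod_cast Nat.lt_two_pow_self
      _ ≤ 2 ^ n * (2 ^ (24 * n) * 2 ^ n) := by
          gcongr
          · exact one_le_two
          · omega
      _ = 2 ^ (26 * n) := by ring
      _ ≤ 2 ^ (29 * n) := pow_le_pow_right₀ one_le_two (by omega)
  exact (hlower.trans h).not_gt hupper

theorem two_rpow_log_two_mul_div_log_le {n : ℕ} (hn : 2 ≤ n) :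
    (2 : ℝ) ^ (Real.log 2 * n / Real.log n) ≤ 2 ^ n := by
  have hlog : Real.log 2 ≤ Real.log n := Real.log_le_log two_pos (by exact_mod_cast hn)
  rw [← Real.rpow_natCast]
  refine Real.rpow_le_rpow_of_exponent_le one_le_two ?_
  rw [div_le_iff₀ ((Real.log_pos one_lt_two).trans_le hlog), mul_comm]
  gcongr

end Constants

theorem makespan_large_xc_subpolytopes_general :
    ∃ C : ℝ, 1 ≤ C ∧ ∀ n : ℕ, 1 ≤ n →
      ∃ (nJ m : ℕ) (p : Fin nJ → ℕ),
        (nJ : ℝ) ≤ C * n ∧ (m : ℝ) ≤ C * n ∧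
        (∀ j, p j = 1 ∨ p j = 2) ∧
        optMakespan nJ m p = 2 ∧
        ∀ (P : Set (Option (Fin m × Fin nJ) → ℝ)) (k : ℕ),
          IsEF P k → P ⊆ Ppoly nJ m p →
          (∀ σ, makespan p σ = 2 → schedulePoint σ 2 ∈ P) → 2 ^ n ≤ k := by
  refine ⟨10 ^ 6, by norm_num, fun n hn => ?_⟩
  set V := BlockVertex (Fin (10 ^ 5 * n))
  set e : V ⊕ V ≃ Fin (Fintype.card (V ⊕ V)) := Fintype.equivFin _
  have hcard : (Fintype.card (V ⊕ V) : ℝ) ≤ 10 ^ 6 * n := by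
    have hn' : (1 : ℝ) ≤ n := by exact_mod_cast hn
    rw [Fintype.card_sum, card_blockVertex, Fintype.card_fin]
    push_cast
    linarith
  have hsize (j : V ⊕ V) : jobSize j = 1 ∨ jobSize j = 2 := by cases j <;> simp [jobSize]
  refine ⟨_, _, jobSize ∘ e.symm, hcard, hcard, fun j => hsize _, optMakespan_jobSize e,
    fun P k hP hsub hopt => two_pow_le_of_exp_le hn ?_⟩
  simpa only [Fintype.card_fin] using exp_le_of_isEF e hP hsub hopt

/-- There are instances of `P||C_max` with `O(n)` jobs and machines, processing times in
`{1,2}` and optimal makespan `2`, such that every polytope contained in `P(J,M)` that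
contains `(x^σ, 2)` for every optimal schedule `σ` and whose extreme points are all of the
form `(x^σ, T)` with `T ∈ ℕ`, `T ≥ makespan(σ)`, has extension complexity at least
`2^(c·n/log n)`. -/
theorem makespan_large_xc_subpolytopes :
    ∃ c C : ℝ, 0 < c ∧ 1 ≤ C ∧ ∀ n : ℕ, 2 ≤ n →
      ∃ (nJ m : ℕ) (p : Fin nJ → ℕ),
        (nJ : ℝ) ≤ C * n ∧ (m : ℝ) ≤ C * n ∧
        (∀ j, p j = 1 ∨ p j = 2) ∧
        optMakespan nJ m p = 2 ∧
        ∀ Pbar : Set (Option (Fin m × Fin nJ) → ℝ),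
          (∃ S : Set (Option (Fin m × Fin nJ) → ℝ), S.Finite ∧ Pbar = convexHull ℝ S) →
          Pbar ⊆ Ppoly nJ m p →
          (∀ σ : Fin nJ → Fin m, makespan p σ = 2 →
            (fun q => Option.elim q (2 : ℝ) (fun ij => assignVec σ ij)) ∈ Pbar) →
          (∀ z ∈ Set.extremePoints ℝ Pbar, ∃ (σ : Fin nJ → Fin m) (t : ℕ),
            makespan p σ ≤ t ∧
            z = fun q => Option.elim q (t : ℝ) (fun ij => assignVec σ ij)) →
          (2 : ℝ) ^ (c * n / Real.log n) ≤ (xc Pbar : ℝ) := by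
  obtain ⟨C, hC, h⟩ := makespan_large_xc_subpolytopes_general
  refine ⟨Real.log 2, C, Real.log_pos one_lt_two, hC, fun n hn => ?_⟩
  obtain ⟨nJ, m, p, hnJ, hm, hp, hopt, hxc⟩ := h n (one_le_two.trans hn)
  refine ⟨nJ, m, p, hnJ, hm, hp, hopt, ?_⟩
  rintro _ ⟨S, hS, rfl⟩ hsub hmem -
  calc (2 : ℝ) ^ (Real.log 2 * n / Real.log n) ≤ 2 ^ n := two_rpow_log_two_mul_div_log_le hn
    _ ≤ xc (convexHull ℝ S) := by exact_mod_cast hxc _ _ (isEF_xc_convexHull hS) hsub hmem
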